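/- arXiv:1511.06636 — 2 statements merged into one kernel-verified Lean document; each statement's English description precedes it below -/
import Mathlib

section
/- Let f : ℝ × ℝ → ℝ be a smooth positive function, let g : ℝ³ → Matrix (Fin 3) (Fin 3) ℝ be smooth with each value symmetric and positive definite, and let Γ^γ_{αβ} denote the Christoffel symbols of g. Let c, k ∈ ℝ and let x : I → ℝ³ be a C² curve such that the curve t ↦ (c, x(t), k) satisfies the 5D Robertson–Walker geodesic system (3.14), and suppose there exists t₀ ∈ I with x'(t₀) ≠ 0. Then: (i) x satisfies the geodesic equations of g, i.e. (x^γ)'' + Σ_{α,β} Γ^γ_{αβ}(x) (x^α)'(x^β)' = 0 for γ ∈ {1,2,3}; and (ii) (c,k) is a critical point of f, i.e. (∂f/∂x⁰)(c,k) = 0 and (∂f/∂x⁴)(c,k) = 0. -/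
/-!
Along `t ↦ (c, x t, k)` the function `f` is constant, so the friction term of the spatial equations
drops out and they become the geodesic equations of `g`. The temporal and vertical equations reduce
to `f · ∂f · g(x', x') = 0` at `(c, k)`; at a time with `x' ≠ 0` both `f` and `g(x', x')` are
positive, which forces both partial derivatives of `f` to vanish.
-/

open scoped BigOperators

/-- The Christoffel symbols `Γ^γ_{αβ}` of a matrix-valued metric
`g : ℝ³ → Matrix (Fin 3) (Fin 3) ℝ`, using directional derivatives along the
coordinate directions. -/
noncomputable def christoffel (g : (Fin 3 → ℝ) → Matrix (Fin 3) (Fin 3) ℝ)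
    (y : Fin 3 → ℝ) (γ α β : Fin 3) : ℝ :=
  (1 / 2) * ∑ μ : Fin 3, (g y)⁻¹ γ μ *
    (fderiv ℝ (fun z => g z μ α) y (Pi.single β 1)
      + fderiv ℝ (fun z => g z μ β) y (Pi.single α 1)
      - fderiv ℝ (fun z => g z α β) y (Pi.single μ 1))

/-- The 5D Robertson–Walker geodesic system (3.14) for a curve
`t ↦ (x0 t, x t, x4 t)` on a set `I ⊆ ℝ`. -/
def RWGeodesic (f : ℝ × ℝ → ℝ)
    (g : (Fin 3 → ℝ) → Matrix (Fin 3) (Fin 3) ℝ) (I : Set ℝ)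
    (x0 : ℝ → ℝ) (x : ℝ → Fin 3 → ℝ) (x4 : ℝ → ℝ) : Prop :=
  (∀ t ∈ I, ∀ γ : Fin 3,
      deriv (deriv fun s => x s γ) t
        + (∑ α : Fin 3, ∑ β : Fin 3,
            christoffel g (x t) γ α β * deriv (fun s => x s α) t * deriv (fun s => x s β) t)
        + 2 * (f (x0 t, x4 t))⁻¹ * deriv (fun s => f (x0 s, x4 s)) t
            * deriv (fun s => x s γ) t = 0) ∧
  (∀ t ∈ I,
      deriv (deriv x0) t
        + f (x0 t, x4 t) * deriv (fun s => f (s, x4 t)) (x0 t)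
            * ∑ α : Fin 3, ∑ β : Fin 3,
                g (x t) α β * deriv (fun s => x s α) t * deriv (fun s => x s β) t = 0) ∧
  (∀ t ∈ I,
      deriv (deriv x4) t
        - f (x0 t, x4 t) * deriv (fun s => f (x0 t, s)) (x4 t)
            * ∑ α : Fin 3, ∑ β : Fin 3,
                g (x t) α β * deriv (fun s => x s α) t * deriv (fun s => x s β) t = 0)

/-- The squared speed `g(x', x')` at time `t` of a curve `x` in coordinate space, for a field `g` of
matrices read as a metric. It is written as the coordinate sum occurring in `RWGeodesic`, with the
velocity taken componentwise. -/
noncomputable def speedSq {ι : Type*} [Fintype ι] (g : (ι → ℝ) → Matrix ι ι ℝ)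
    (x : ℝ → ι → ℝ) (t : ℝ) : ℝ :=
  ∑ α, ∑ β, g (x t) α β * deriv (fun s => x s α) t * deriv (fun s => x s β) t

section speedSq

variable {ι : Type*} [Fintype ι] (g : (ι → ℝ) → Matrix ι ι ℝ) (x : ℝ → ι → ℝ) (t : ℝ)

theorem speedSq_eq_dotProduct_mulVec :
    speedSq g x t =
      (fun α => deriv (fun s => x s α) t) ⬝ᵥ
        (g (x t)).mulVec (fun α => deriv (fun s => x s α) t) := by
  simp only [speedSq, dotProduct, Matrix.mulVec, Finset.mul_sum]
  exact Finset.sum_congr rfl fun α _ => Finset.sum_congr rfl fun β _ => by ring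

variable {g x t}

theorem speedSq_pos (hg : (g (x t)).PosDef) {γ : ι} (hγ : deriv (fun s => x s γ) t ≠ 0) :
    0 < speedSq g x t := by
  have velocity_ne_zero : (fun α => deriv (fun s => x s α) t) ≠ 0 := fun h => hγ (congrFun h γ)
  rw [speedSq_eq_dotProduct_mulVec]
  simpa only [star_trivial] using hg.dotProduct_mulVec_pos velocity_ne_zero

end speedSq

namespace RWGeodesic

variable {f : ℝ × ℝ → ℝ} {g : (Fin 3 → ℝ) → Matrix (Fin 3) (Fin 3) ℝ} {I : Set ℝ}
  {x0 : ℝ → ℝ} {x : ℝ → Fin 3 → ℝ} {x4 : ℝ → ℝ} {t : ℝ}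

theorem geodesic_eq_of_deriv_warping_eq_zero (h : RWGeodesic f g I x0 x x4) (ht : t ∈ I)
    (hf' : deriv (fun s => f (x0 s, x4 s)) t = 0) (γ : Fin 3) :
    deriv (deriv fun s => x s γ) t
      + ∑ α : Fin 3, ∑ β : Fin 3,
          christoffel g (x t) γ α β * deriv (fun s => x s α) t
            * deriv (fun s => x s β) t = 0 := by
  simpa only [hf', mul_zero, zero_mul, add_zero] using h.1 t ht γ

theorem temporal_deriv_warping_eq_zero (h : RWGeodesic f g I x0 x x4) (ht : t ∈ I)
    (hx0 : deriv (deriv x0) t = 0) (hf : f (x0 t, x4 t) ≠ 0) (hv : speedSq g x t ≠ 0) :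
    deriv (fun s => f (s, x4 t)) (x0 t) = 0 := by
  have temporal_eq :
      f (x0 t, x4 t) * deriv (fun s => f (s, x4 t)) (x0 t) * speedSq g x t = 0 := by
    simpa only [speedSq, hx0, zero_add] using h.2.1 t ht
  exact (mul_eq_zero_iff_left hf).mp ((mul_eq_zero_iff_right hv).mp temporal_eq)

theorem vertical_deriv_warping_eq_zero (h : RWGeodesic f g I x0 x x4) (ht : t ∈ I)
    (hx4 : deriv (deriv x4) t = 0) (hf : f (x0 t, x4 t) ≠ 0) (hv : speedSq g x t ≠ 0) :
    deriv (fun s => f (x0 t, s)) (x4 t) = 0 := by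
  have vertical_eq :
      f (x0 t, x4 t) * deriv (fun s => f (x0 t, s)) (x4 t) * speedSq g x t = 0 := by
    simpa only [speedSq, hx4, zero_sub, neg_eq_zero] using h.2.2 t ht
  exact (mul_eq_zero_iff_left hf).mp ((mul_eq_zero_iff_right hv).mp vertical_eq)

end RWGeodesic

/-- necessity direction of Theorem 4.4.  A nonconstant spatial
geodesic `t ↦ (c, x t, k)` forces `x` to solve the geodesic equations of `g`
and `(c,k)` to be a critical point of the warping function `f`. -/
theorem critical_point_of_spatial_geodesic
    (f : ℝ × ℝ → ℝ) (hf : ContDiff ℝ (⊤ : ℕ∞) f) (hfpos : ∀ p, 0 < f p)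
    (g : (Fin 3 → ℝ) → Matrix (Fin 3) (Fin 3) ℝ)
    (hg : ∀ α β : Fin 3, ContDiff ℝ (⊤ : ℕ∞) fun y => g y α β)
    (hgsym : ∀ y, (g y).IsSymm) (hgpd : ∀ y, (g y).PosDef)
    (c k : ℝ) (I : Set ℝ) (x : ℝ → Fin 3 → ℝ) (hx : ContDiff ℝ 2 x)
    (hgeo : RWGeodesic f g I (fun _ => c) x (fun _ => k))
    (hnc : ∃ t₀ ∈ I, ∃ γ : Fin 3, deriv (fun s => x s γ) t₀ ≠ 0) :
    (∀ t ∈ I, ∀ γ : Fin 3,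
        deriv (deriv fun s => x s γ) t
          + ∑ α : Fin 3, ∑ β : Fin 3,
              christoffel g (x t) γ α β * deriv (fun s => x s α) t
                * deriv (fun s => x s β) t = 0) ∧
      deriv (fun s => f (s, k)) c = 0 ∧ deriv (fun s => f (c, s)) k = 0 := by
  obtain ⟨t₀, ht₀, γ₀, hγ₀⟩ := hnc
  have speed_ne_zero : speedSq g x t₀ ≠ 0 := (speedSq_pos (hgpd (x t₀)) hγ₀).ne'
  have warping_ne_zero : f (c, k) ≠ 0 := (hfpos (c, k)).ne'
  have const_accel (a : ℝ) : deriv (deriv fun _ : ℝ => a) t₀ = 0 := by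
    simp only [deriv_const']
  exact ⟨fun t ht => hgeo.geodesic_eq_of_deriv_warping_eq_zero ht (deriv_const t (f (c, k))),
    hgeo.temporal_deriv_warping_eq_zero ht₀ (const_accel c) warping_ne_zero speed_ne_zero,
    hgeo.vertical_deriv_warping_eq_zero ht₀ (const_accel k) warping_ne_zero speed_ne_zero⟩
end

section
/- Let f : ℝ × ℝ → ℝ be a smooth positive function and let g : ℝ³ → Matrix (Fin 3) (Fin 3) ℝ be smooth with each value symmetric and positive definite, with Christoffel symbols Γ^γ_{αβ}. If there exists an interval I, constants c, k ∈ ℝ, and a C² curve x : I → ℝ³ with x'(t₀) ≠ 0 for some t₀ ∈ I such that t ↦ (c, x(t), k) satisfies the 5D Robertson–Walker geodesic system (3.14) (i.e. a nonconstant spatial geodesic exists), then f has a critical point: there exists (c,k) ∈ ℝ² with (∂f/∂x⁰)(c,k) = 0 and (∂f/∂x⁴)(c,k) = 0. Conversely, if (c,k) ∈ ℝ² is a critical point of f, then for every p, v ∈ ℝ³ with v ≠ 0 there exist an open interval I containing 0 and a C² curve x : I → ℝ³ with x(0) = p, x'(0) = v, and x'(t) ≠ 0 for all t ∈ I, such that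 t ↦ (c, x(t), k) satisfies (3.14); hence nonconstant spatial geodesics exist if and only if the warping function f has at least one critical point. -/
open scoped BigOperators

/-!
Along a curve with constant temporal and vertical components `c`, `k`, the temporal and vertical
equations read `± f · ∂f · g(x', x') = 0`. Since `f ≠ 0` and `g` is positive definite, a single
nonzero velocity forces both partial derivatives of `f` to vanish at `(c, k)`. Conversely, at a
critical point these two equations hold for every curve, and the spatial one is the geodesic
equation of `g`, because `f` is constant along the curve. The Christoffel symbols of a `C²` metric
are `C¹`, so the Picard–Lindelöf theorem provides a geodesic germ with prescribed initial data; a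
bump function turns it into a curve that is `C²` on all of `ℝ`.
-/

open Filter Topology

section PartialDerivatives

variable {𝕜 F : Type*} [NontriviallyNormedField 𝕜] [NormedAddCommGroup F] [NormedSpace 𝕜 F]

lemma fderiv_eq_zero_iff_deriv_eq_zero {f : 𝕜 × 𝕜 → F} {q : 𝕜 × 𝕜}
    (hf : DifferentiableAt 𝕜 f q) :
    fderiv 𝕜 f q = 0 ↔
      deriv (fun s => f (s, q.2)) q.1 = 0 ∧ deriv (fun s => f (q.1, s)) q.2 = 0 := by
  have deriv_fst : deriv (fun s => f (s, q.2)) q.1 = fderiv 𝕜 f q (1, 0) :=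
    (hf.hasFDerivAt.comp_hasDerivAt q.1 ((hasDerivAt_id _).prodMk (hasDerivAt_const _ q.2))).deriv
  have deriv_snd : deriv (fun s => f (q.1, s)) q.2 = fderiv 𝕜 f q (0, 1) :=
    (hf.hasFDerivAt.comp_hasDerivAt q.2 ((hasDerivAt_const _ q.1).prodMk (hasDerivAt_id _))).deriv
  rw [deriv_fst, deriv_snd]
  refine ⟨fun h => by simp [h], fun ⟨h₁, h₂⟩ => ContinuousLinearMap.prod_ext ?_ ?_⟩ <;>
    ext <;> simpa

end PartialDerivatives

section MatrixSmoothness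

variable {𝕜 E ι : Type*} [NontriviallyNormedField 𝕜] [NormedAddCommGroup E] [NormedSpace 𝕜 E]
  [Fintype ι] [DecidableEq ι] {n : WithTop ℕ∞} {A : E → Matrix ι ι 𝕜} {y : E}

lemma contDiffAt_matrix_det (hA : ∀ i j, ContDiffAt 𝕜 n (fun z => A z i j) y) :
    ContDiffAt 𝕜 n (fun z => (A z).det) y := by
  simp only [Matrix.det_apply']
  exact ContDiffAt.sum fun σ _ => contDiffAt_const.mul (contDiffAt_prod fun i _ => hA (σ i) i)

lemma contDiffAt_matrix_adjugate_apply (hA : ∀ i j, ContDiffAt 𝕜 n (fun z => A z i j) y)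
    (i j : ι) : ContDiffAt 𝕜 n (fun z => (A z).adjugate i j) y := by
  simp only [Matrix.adjugate_apply]
  refine contDiffAt_matrix_det fun k l => ?_
  obtain rfl | hk := eq_or_ne k j
  · simpa only [Matrix.updateRow_self] using contDiffAt_const
  · simpa only [Matrix.updateRow_ne hk] using hA k l

lemma contDiffAt_matrix_inv_apply (hA : ∀ i j, ContDiffAt 𝕜 n (fun z => A z i j) y)
    (hdet : (A y).det ≠ 0) (i j : ι) : ContDiffAt 𝕜 n (fun z => (A z)⁻¹ i j) y := by
  simp only [Matrix.inv_def, Ring.inverse_eq_inv', Matrix.smul_apply, smul_eq_mul]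
  exact ((contDiffAt_matrix_det hA).inv hdet).mul (contDiffAt_matrix_adjugate_apply hA i j)

end MatrixSmoothness

section SecondOrderODE

variable {E : Type*} [NormedAddCommGroup E] [NormedSpace ℝ E]

lemma exists_contDiff_eventuallyEq_of_contDiffAt {D : Type*} [NormedAddCommGroup D]
    [NormedSpace ℝ D] [HasContDiffBump D] {n : ℕ} {f : D → E} {x : D}
    (hf : ContDiffAt ℝ n f x) : ∃ h : D → E, ContDiff ℝ n h ∧ h =ᶠ[𝓝 x] f := by
  obtain ⟨r, hr, hball⟩ := Metric.eventually_nhds_iff_ball.1 (hf.eventually (by simp))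
  let χ : ContDiffBump x := ⟨r / 3, r / 2, by positivity, by linarith⟩
  refine ⟨fun z => χ z • f z, contDiff_iff_contDiffAt.2 fun z => ?_, ?_⟩
  · by_cases hz : z ∈ tsupport χ
    · have hzr : z ∈ Metric.ball x r :=
        Metric.closedBall_subset_ball (half_lt_self hr) (χ.tsupport_eq ▸ hz)
      exact χ.contDiffAt.smul (hball z hzr)
    · refine contDiffAt_const (c := 0) |>.congr_of_eventuallyEq ?_
      filter_upwards [notMem_tsupport_iff_eventuallyEq.1 hz] with w hw
      simp [hw]
  · filter_upwards [χ.eventuallyEq_one] with z hz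
    simp [hz]

lemma contDiffAt_succ_of_eventually_hasDerivAt {n : ℕ} {a a' : ℝ → E} {t₀ : ℝ}
    (ha : ∀ᶠ t in 𝓝 t₀, HasDerivAt a (a' t) t) (ha' : ContDiffAt ℝ n a' t₀) :
    ContDiffAt ℝ (n + 1) a t₀ :=
  contDiffAt_succ_iff_hasFDerivAt.2
    ⟨fun t => .toSpanSingleton ℝ (a' t), ⟨_, ha, fun _ ht => ht.hasFDerivAt⟩,
      (ContinuousLinearMap.toSpanSingletonCLE (𝕜 := ℝ) (E := E)).contDiff.contDiffAt.comp t₀ ha'⟩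

lemma contDiffAt_succ_of_eventually_hasDerivAt_comp {n : ℕ} {V : E → E} {a : ℝ → E} {t₀ : ℝ}
    (hV : ContDiffAt ℝ n V (a t₀)) (ha : ∀ᶠ t in 𝓝 t₀, HasDerivAt a (V (a t)) t) :
    ContDiffAt ℝ (n + 1) a t₀ := by
  have ha_n : ContDiffAt ℝ n a t₀ := by
    induction n with
    | zero =>
      exact contDiffAt_zero.2 ⟨_, ha, fun t ht => ht.continuousAt.continuousWithinAt⟩
    | succ m ih =>
      have hV_m : ContDiffAt ℝ m V (a t₀) := hV.of_le (by exact_mod_cast m.le_succ)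
      exact_mod_cast contDiffAt_succ_of_eventually_hasDerivAt ha (hV_m.comp t₀ (ih hV_m))
  exact contDiffAt_succ_of_eventually_hasDerivAt ha (hV.comp t₀ ha_n)

lemma exists_contDiff_two_eventually_hasDerivAt_deriv [CompleteSpace E] {F : E × E → E} {p v : E}
    (hF : ContDiffAt ℝ 1 F (p, v)) (t₀ : ℝ) :
    ∃ x : ℝ → E, ContDiff ℝ 2 x ∧ x t₀ = p ∧ deriv x t₀ = v ∧
      ∀ᶠ t in 𝓝 t₀, HasDerivAt (deriv x) (F (x t, deriv x t)) t := by
  have hV : ContDiffAt ℝ 1 (fun z : E × E => (z.2, F z)) (p, v) := contDiffAt_snd.prodMk hF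
  obtain ⟨a, ha₀, ε, hε, ha⟩ :=
    hV.exists_forall_mem_closedBall_exists_eq_forall_mem_Ioo_hasDerivAt₀ t₀
  have ha : ∀ᶠ t in 𝓝 t₀, HasDerivAt a ((a t).2, F (a t)) t := by
    filter_upwards [Ioo_mem_nhds (sub_lt_self t₀ hε) (lt_add_of_pos_right t₀ hε)] using ha
  have ha_two : ContDiffAt ℝ (1 + 1) a t₀ :=
    contDiffAt_succ_of_eventually_hasDerivAt_comp (n := 1) (ha₀ ▸ hV) ha
  obtain ⟨x, hx, hxa⟩ := exists_contDiff_eventuallyEq_of_contDiffAt (n := 2)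
    (f := fun t => (a t).1) (ha_two.fst.of_le (by norm_num))
  have hx' : deriv x =ᶠ[𝓝 t₀] fun t => (a t).2 := by
    filter_upwards [hxa.eventuallyEq_nhds, ha] with t hxt hat
    rw [hxt.deriv_eq]
    exact (hasFDerivAt_fst.comp_hasDerivAt t hat).deriv
  refine ⟨x, hx, by rw [hxa.eq_of_nhds, ha₀], by rw [hx'.eq_of_nhds, ha₀], ?_⟩
  filter_upwards [hxa, hx'.eventuallyEq_nhds, ha] with t hxt hxt' hat
  rw [hxt, hxt'.eq_of_nhds]
  exact (hasFDerivAt_snd.comp_hasDerivAt t hat).congr_of_eventuallyEq hxt'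

end SecondOrderODE

section Geodesics

variable {g : (Fin 3 → ℝ) → Matrix (Fin 3) (Fin 3) ℝ}

lemma contDiffAt_christoffel {n : WithTop ℕ∞} {y : Fin 3 → ℝ}
    (hg : ∀ α β, ContDiffAt ℝ (n + 1) (fun z => g z α β) y) (hdet : (g y).det ≠ 0)
    (γ α β : Fin 3) : ContDiffAt ℝ n (fun z => christoffel g z γ α β) y := by
  have hg_inv (i j : Fin 3) : ContDiffAt ℝ n (fun z => (g z)⁻¹ i j) y :=
    contDiffAt_matrix_inv_apply (fun i j => (hg i j).of_le le_self_add) hdet i j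
  have hg_fderiv (i j : Fin 3) (u : Fin 3 → ℝ) :
      ContDiffAt ℝ n (fun y => fderiv ℝ (fun z => g z i j) y u) y :=
    ((hg i j).fderiv_right le_rfl).clm_apply contDiffAt_const
  exact contDiffAt_const.mul <| ContDiffAt.sum fun μ _ =>
    (hg_inv γ μ).mul (((hg_fderiv μ α _).add (hg_fderiv μ β _)).sub (hg_fderiv α β _))

/-- The acceleration `-Γ^γ_{αβ}(y) w^α w^β` of a geodesic of `g` at position `y` with velocity `w`;
the pair `z = (y, w)` is a point of the phase space on which the geodesic equation is a first-order
system. -/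
noncomputable def geodesicAcceleration (g : (Fin 3 → ℝ) → Matrix (Fin 3) (Fin 3) ℝ)
    (z : (Fin 3 → ℝ) × (Fin 3 → ℝ)) (γ : Fin 3) : ℝ :=
  -∑ α : Fin 3, ∑ β : Fin 3, christoffel g z.1 γ α β * z.2 α * z.2 β

lemma contDiffAt_geodesicAcceleration {n : WithTop ℕ∞} {p v : Fin 3 → ℝ}
    (hg : ∀ α β, ContDiffAt ℝ (n + 1) (fun y => g y α β) p) (hdet : (g p).det ≠ 0) :
    ContDiffAt ℝ n (geodesicAcceleration g) (p, v) := by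
  refine contDiffAt_pi.2 fun γ => (ContDiffAt.sum fun α _ => ContDiffAt.sum fun β _ => ?_).neg
  have hΓ : ContDiffAt ℝ n
      (fun z : (Fin 3 → ℝ) × (Fin 3 → ℝ) => christoffel g z.1 γ α β) (p, v) :=
    ContDiffAt.fst' (contDiffAt_christoffel hg hdet γ α β)
  fun_prop

lemma exists_geodesic_forall_deriv_ne_zero {p v : Fin 3 → ℝ}
    (hg : ∀ α β, ContDiffAt ℝ 2 (fun y => g y α β) p) (hdet : (g p).det ≠ 0) (hv : v ≠ 0) :
    ∃ (ε : ℝ) (x : ℝ → Fin 3 → ℝ), 0 < ε ∧ ContDiff ℝ 2 x ∧ x 0 = p ∧ deriv x 0 = v ∧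
      (∀ t ∈ Set.Ioo (-ε) ε, deriv x t ≠ 0) ∧
      ∀ t ∈ Set.Ioo (-ε) ε, HasDerivAt (deriv x) (geodesicAcceleration g (x t, deriv x t)) t := by
  have hacc : ContDiffAt ℝ 1 (geodesicAcceleration g) (p, v) :=
    contDiffAt_geodesicAcceleration (by simpa only [one_add_one_eq_two] using hg) hdet
  obtain ⟨x, hx, hx₀, hx₀', hgeo⟩ := exists_contDiff_two_eventually_hasDerivAt_deriv hacc 0
  have hne : ∀ᶠ t in 𝓝 0, deriv x t ≠ 0 :=
    (hx.continuous_deriv one_le_two).continuousAt.eventually_ne (hx₀' ▸ hv)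
  obtain ⟨ε, hε, hIoo⟩ := (nhds_basis_Ioo_pos (0 : ℝ)).eventually_iff.1 (hne.and hgeo)
  rw [zero_sub, zero_add] at hIoo
  exact ⟨ε, x, hε, hx, hx₀, hx₀', fun t ht => (hIoo ht).1, fun t ht => (hIoo ht).2⟩

lemma sum_sum_mul_mul_pos_of_posDef {ι R : Type*} [Fintype ι] [CommRing R] [PartialOrder R]
    [StarRing R] [TrivialStar R] {M : Matrix ι ι R} (hM : M.PosDef) {w : ι → R} (hw : w ≠ 0) :
    0 < ∑ α, ∑ β, M α β * w α * w β := by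
  calc 0 < star w ⬝ᵥ (M.mulVec w) := hM.dotProduct_mulVec_pos hw
    _ = ∑ α, ∑ β, M α β * w α * w β := by
      simp only [dotProduct, Matrix.mulVec, star_trivial, Finset.mul_sum, mul_left_comm, mul_assoc]

variable {f : ℝ × ℝ → ℝ} {I : Set ℝ} {c k : ℝ} {x : ℝ → Fin 3 → ℝ}

lemma RWGeodesic.deriv_warping_eq_zero (hx : RWGeodesic f g I (fun _ => c) x (fun _ => k))
    (hf : f (c, k) ≠ 0) {t : ℝ} (ht : t ∈ I) (hg : (g (x t)).PosDef) {γ : Fin 3}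
    (hγ : deriv (fun s => x s γ) t ≠ 0) :
    deriv (fun s => f (s, k)) c = 0 ∧ deriv (fun s => f (c, s)) k = 0 := by
  obtain ⟨-, temporal, vertical⟩ := hx
  have speed_pos : 0 < ∑ α, ∑ β,
      g (x t) α β * deriv (fun s => x s α) t * deriv (fun s => x s β) t :=
    sum_sum_mul_mul_pos_of_posDef hg (w := fun α => deriv (fun s => x s α) t)
      (Function.ne_iff.2 ⟨γ, hγ⟩)
  constructor
  · simpa [hf, speed_pos.ne'] using temporal t ht
  · simpa [hf, speed_pos.ne'] using vertical t ht

lemma rwGeodesic_const_of_hasDerivAt_deriv (hc : deriv (fun s => f (s, k)) c = 0)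
    (hk : deriv (fun s => f (c, s)) k = 0) (hx : Differentiable ℝ x)
    (hgeo : ∀ t ∈ I, HasDerivAt (deriv x) (geodesicAcceleration g (x t, deriv x t)) t) :
    RWGeodesic f g I (fun _ => c) x (fun _ => k) := by
  have deriv_apply (γ : Fin 3) : (deriv fun s => x s γ) = fun t => deriv x t γ :=
    funext fun t => (hasDerivAt_pi.1 (hx t).hasDerivAt γ).deriv
  refine ⟨fun t ht γ => ?_, fun t _ => by simp [hc], fun t _ => by simp [hk]⟩
  have acceleration : deriv (fun s => deriv x s γ) t = geodesicAcceleration g (x t, deriv x t) γ :=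
    (hasDerivAt_pi.1 (hgeo t ht) γ).deriv
  simp only [deriv_apply, acceleration, geodesicAcceleration, deriv_const]
  ring

end Geodesics

theorem spatial_geodesics_exist_iff_critical_point_general
    {f : ℝ × ℝ → ℝ} (hf : Differentiable ℝ f) (hf₀ : ∀ q, f q ≠ 0)
    {g : (Fin 3 → ℝ) → Matrix (Fin 3) (Fin 3) ℝ}
    (hg : ∀ α β : Fin 3, ContDiff ℝ 2 fun y => g y α β) (hgpd : ∀ y, (g y).PosDef) :
    ((∃ (I : Set ℝ) (c k : ℝ) (x : ℝ → Fin 3 → ℝ),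
        ContDiff ℝ 2 x ∧
        (∃ t₀ ∈ I, ∃ γ : Fin 3, deriv (fun s => x s γ) t₀ ≠ 0) ∧
        RWGeodesic f g I (fun _ => c) x (fun _ => k)) →
      ∃ q : ℝ × ℝ, fderiv ℝ f q = 0) ∧
    (∀ c k : ℝ, fderiv ℝ f (c, k) = 0 →
      ∀ p v : Fin 3 → ℝ, v ≠ 0 →
        ∃ (ε : ℝ) (x : ℝ → Fin 3 → ℝ),
          0 < ε ∧ ContDiff ℝ 2 x ∧ x 0 = p ∧ deriv x 0 = v ∧
          (∀ t ∈ Set.Ioo (-ε) ε, deriv x t ≠ 0) ∧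
          RWGeodesic f g (Set.Ioo (-ε) ε) (fun _ => c) x (fun _ => k)) := by
  constructor
  · rintro ⟨I, c, k, x, -, ⟨t₀, ht₀, γ, hγ⟩, hx⟩
    exact ⟨(c, k), (fderiv_eq_zero_iff_deriv_eq_zero (hf (c, k))).2
      (hx.deriv_warping_eq_zero (hf₀ (c, k)) ht₀ (hgpd (x t₀)) hγ)⟩
  · intro c k hcrit p v hv
    obtain ⟨hc, hk⟩ := (fderiv_eq_zero_iff_deriv_eq_zero (hf (c, k))).1 hcrit
    obtain ⟨ε, x, hε, hx, hx₀, hx₀', hne, hgeo⟩ := exists_geodesic_forall_deriv_ne_zero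
      (fun α β => (hg α β).contDiffAt) (hgpd p).det_pos.ne' hv
    exact ⟨ε, x, hε, hx, hx₀, hx₀', hne,
      rwGeodesic_const_of_hasDerivAt_deriv hc hk (hx.differentiable two_ne_zero) hgeo⟩

/-- existence remark after Theorem 4.4.  Nonconstant spatial
geodesics of the 5D Robertson–Walker universe exist iff the warping function
`f` has at least one critical point. -/
theorem spatial_geodesics_exist_iff_critical_point
    (f : ℝ × ℝ → ℝ) (hf : ContDiff ℝ (⊤ : ℕ∞) f) (hfpos : ∀ p, 0 < f p)
    (g : (Fin 3 → ℝ) → Matrix (Fin 3) (Fin 3) ℝ)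
    (hg : ∀ α β : Fin 3, ContDiff ℝ (⊤ : ℕ∞) fun y => g y α β)
    (hgsym : ∀ y, (g y).IsSymm) (hgpd : ∀ y, (g y).PosDef) :
    ((∃ (I : Set ℝ) (c k : ℝ) (x : ℝ → Fin 3 → ℝ),
        ContDiff ℝ 2 x ∧
        (∃ t₀ ∈ I, ∃ γ : Fin 3, deriv (fun s => x s γ) t₀ ≠ 0) ∧
        RWGeodesic f g I (fun _ => c) x (fun _ => k)) →
      ∃ q : ℝ × ℝ,
        deriv (fun s => f (s, q.2)) q.1 = 0 ∧ deriv (fun s => f (q.1, s)) q.2 = 0) ∧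
    (∀ c k : ℝ,
      deriv (fun s => f (s, k)) c = 0 → deriv (fun s => f (c, s)) k = 0 →
      ∀ p v : Fin 3 → ℝ, v ≠ 0 →
        ∃ (ε : ℝ) (x : ℝ → Fin 3 → ℝ),
          0 < ε ∧ ContDiff ℝ 2 x ∧ x 0 = p ∧ deriv x 0 = v ∧
          (∀ t ∈ Set.Ioo (-ε) ε, deriv x t ≠ 0) ∧
          RWGeodesic f g (Set.Ioo (-ε) ε) (fun _ => c) x (fun _ => k)) := by
  have hf' : Differentiable ℝ f := hf.differentiable (by simp)
  simpa only [fderiv_eq_zero_iff_deriv_eq_zero (hf' _), and_imp] using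
    spatial_geodesics_exist_iff_critical_point_general hf' (fun q => (hfpos q).ne')
      (fun α β => (hg α β).of_le (WithTop.coe_le_coe.2 le_top)) hgpd
end
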